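/- Soundness of H_K with respect to the RNmatrix RM_K: for every set of formulas Γ and every formula A, if Γ ⊢_{H_K} A then every valuation v ∈ F_K that designates all formulas of Γ also designates A. -/

import Mathlib

/-- Formulas of the modal language: propositional variables, negation,
the modality ⊖ (here `box`), and implication. -/
inductive Form : Type
  | var : ℕ → Form
  | neg : Form → Form
  | box : Form → Form
  | imp : Form → Form → Form

/-- A valuation `v = (v1, v2)` over the 4-valued Nmatrix for the minimal modal
logic M: `v1` behaves classically on ¬ and →, and `v1(⊖A) = v2(A)`;
`v2` is otherwise unconstrained. -/
structure Val where
  v1 : Form → Fin 2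
  v2 : Form → Fin 2
  neg_eq : ∀ A, v1 (Form.neg A) = 1 - v1 A
  imp_eq : ∀ A B, v1 (Form.imp A B) = max (1 - v1 A) (v1 B)
  box_eq : ∀ A, v1 (Form.box A) = v2 A

/-- The Hilbert calculus H_K: H plus axiom schema (K). -/
inductive HK : Set Form → Form → Prop
  | hyp {Γ A} : A ∈ Γ → HK Γ A
  | ax1 {Γ} (A B : Form) : HK Γ (A.imp (B.imp A))
  | ax2 {Γ} (A B C : Form) :
      HK Γ ((A.imp (B.imp C)).imp ((A.imp B).imp (A.imp C)))
  | ax3 {Γ} (A B : Form) : HK Γ ((B.neg.imp A.neg).imp (A.imp B))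
  | axK {Γ} (A B : Form) :
      HK Γ ((Form.box (A.imp B)).imp ((Form.box A).imp (Form.box B)))
  | mp {Γ A B} : HK Γ (A.imp B) → HK Γ A → HK Γ B

/-- The restriction defining F_K: valuations satisfying the (K) condition. -/
def FK (v : Val) : Prop :=
  ∀ A B : Form, v.v2 (A.imp B) ≤ max (1 - v.v2 A) (v.v2 B)

/-! Once a formula is identified with the proposition that its value is `1`, the truth tables of
`¬` and `→` become the connectives of the metalanguage. The classical axiom schemas are then
tautologies, and the restriction `FK` says precisely that all instances of (K) are designated. -/

theorem fin_two_one_sub_eq_one_iff (a : Fin 2) : 1 - a = 1 ↔ ¬a = 1 := by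
  revert a; decide

theorem fin_two_max_one_sub_eq_one_iff (a b : Fin 2) : max (1 - a) b = 1 ↔ (a = 1 → b = 1) := by
  revert a b; decide

theorem fin_two_le_iff_eq_one_imp (a b : Fin 2) : a ≤ b ↔ (a = 1 → b = 1) := by
  revert a b; decide

namespace Val

variable (v : Val) (A B C : Form)

theorem v1_neg_eq_one_iff : v.v1 A.neg = 1 ↔ ¬v.v1 A = 1 := by
  rw [v.neg_eq, fin_two_one_sub_eq_one_iff]

theorem v1_imp_eq_one_iff : v.v1 (A.imp B) = 1 ↔ (v.v1 A = 1 → v.v1 B = 1) := by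
  rw [v.imp_eq, fin_two_max_one_sub_eq_one_iff]

theorem v1_ax1_eq_one : v.v1 (A.imp (B.imp A)) = 1 := by
  simp only [v1_imp_eq_one_iff]
  exact fun hA _ => hA

theorem v1_ax2_eq_one : v.v1 ((A.imp (B.imp C)).imp ((A.imp B).imp (A.imp C))) = 1 := by
  simp only [v1_imp_eq_one_iff]
  exact fun hABC hAB hA => hABC hA (hAB hA)

theorem v1_ax3_eq_one : v.v1 ((B.neg.imp A.neg).imp (A.imp B)) = 1 := by
  simp only [v1_imp_eq_one_iff, v1_neg_eq_one_iff]
  exact fun hBA hA => by_contra fun hB => hBA hB hA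

end Val

theorem FK_iff_forall_v1_axK_eq_one (v : Val) :
    FK v ↔ ∀ A B : Form, v.v1 ((A.imp B).box.imp (A.box.imp B.box)) = 1 := by
  simp only [FK, fin_two_le_iff_eq_one_imp, fin_two_max_one_sub_eq_one_iff, v.v1_imp_eq_one_iff,
    v.box_eq]

/-- Soundness of H_K w.r.t. the RNmatrix RM_K. -/
theorem soundness_HK (Γ : Set Form) (A : Form) (h : HK Γ A) :
    ∀ v : Val, FK v → (∀ B ∈ Γ, v.v1 B = 1) → v.v1 A = 1 := by
  intro v hv hΓ
  induction h with
  | hyp hA => exact hΓ _ hA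
  | ax1 A B => exact v.v1_ax1_eq_one A B
  | ax2 A B C => exact v.v1_ax2_eq_one A B C
  | ax3 A B => exact v.v1_ax3_eq_one A B
  | axK A B => exact (FK_iff_forall_v1_axK_eq_one v).mp hv A B
  | mp _ _ ihAB ihA => exact (v.v1_imp_eq_one_iff _ _).mp ihAB ihA
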